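/- Let A be a nonnegatively filtered algebra over a field, with central elements z_1,...,z_n whose top symbols form a regular sequence in the commutative associated graded algebra Gr A. If Gr A modulo the ideal generated by the top symbols Gr z_1,...,Gr z_n is an integral domain, then A/(z_1,...,z_n) is an integral domain. -/

import Mathlib

/-- A nonnegative exhaustive algebra filtration `F₀ ⊆ F₁ ⊆ ⋯` on a `k`-algebra `A`,
with `1 ∈ F₀` and `Fᵢ · Fⱼ ⊆ F_{i+j}`. -/
structure AlgFiltration (k A : Type*) [Field k] [Ring A] [Algebra k A] where
  F : ℕ → Submodule k A
  mono : Monotone F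
  one_mem : (1 : A) ∈ F 0
  mul_mem : ∀ {i j : ℕ} {a b : A}, a ∈ F i → b ∈ F j → a * b ∈ F (i + j)
  exhaustive : ∀ a : A, ∃ i, a ∈ F i

namespace AlgFiltration

variable {k A : Type*} [Field k] [Ring A] [Algebra k A]

/-- `prev i` is `F (i-1)`, with the convention `F (-1) = 0`. -/
def prev (𝓕 : AlgFiltration k A) (i : ℕ) : Submodule k A :=
  if i = 0 then ⊥ else 𝓕.F (i - 1)

/-- The associated graded algebra `Gr A` is commutative. -/
def GrComm (𝓕 : AlgFiltration k A) : Prop :=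
  ∀ {i j : ℕ} {a b : A}, a ∈ 𝓕.F i → b ∈ 𝓕.F j → a * b - b * a ∈ 𝓕.prev (i + j)

/-- The degree-`i` part of the ideal of `Gr A` generated by the top symbols
`Gr z_j` (`j < l`), pulled back to `F i`. -/
def symIdeal (𝓕 : AlgFiltration k A) {n : ℕ} (z : Fin n → A) (d : Fin n → ℕ)
    (l i : ℕ) : Submodule k A :=
  (⨆ (j : Fin n) (_ : (j : ℕ) < l) (_ : d j ≤ i),
      (𝓕.F (i - d j)).map (LinearMap.mulRight k (z j))) ⊔ 𝓕.prev i

end AlgFiltration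

namespace AlgFiltration

variable {k A : Type*} [Field k] [Ring A] [Algebra k A]

/-- The left ideal generated by the `z j` with `j < l`. -/
def partialSpan {n : ℕ} (z : Fin n → A) (l : ℕ) : Ideal A :=
  Ideal.span (Set.image z {j | (j : ℕ) < l})

/-- The sums `∑ aⱼ zⱼ` over `j < l` in which every term has filtration degree at most `i`. -/
def boundedSpan (𝓕 : AlgFiltration k A) {n : ℕ} (z : Fin n → A) (d : Fin n → ℕ)
    (l i : ℕ) : Submodule k A :=
  ⨆ (j : Fin n) (_ : (j : ℕ) < l) (_ : d j ≤ i),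
    (𝓕.F (i - d j)).map (LinearMap.mulRight k (z j))

theorem symIdeal_eq (𝓕 : AlgFiltration k A) {n : ℕ} (z : Fin n → A) (d : Fin n → ℕ)
    (l i : ℕ) : 𝓕.symIdeal z d l i = 𝓕.boundedSpan z d l i ⊔ 𝓕.prev i :=
  rfl

theorem prev_zero (𝓕 : AlgFiltration k A) : 𝓕.prev 0 = ⊥ := by
  simp [prev]

theorem prev_succ (𝓕 : AlgFiltration k A) (i : ℕ) : 𝓕.prev (i + 1) = 𝓕.F i := by
  simp [prev]

theorem F_le_prev (𝓕 : AlgFiltration k A) {i m : ℕ} (h : i < m) : 𝓕.F i ≤ 𝓕.prev m := by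
  obtain ⟨m, rfl⟩ := Nat.exists_eq_add_one_of_ne_zero (Nat.ne_zero_of_lt h)
  rw [prev_succ]
  exact 𝓕.mono (Nat.le_of_lt_succ h)

theorem partialSpan_zero {n : ℕ} (z : Fin n → A) : partialSpan z 0 = ⊥ := by
  simp [partialSpan]

theorem partialSpan_top {n : ℕ} (z : Fin n → A) :
    partialSpan z n = Ideal.span (Set.range z) := by
  simp [partialSpan]

theorem partialSpan_succ {n : ℕ} (z : Fin n → A) {l : ℕ} (hl : l < n) {x : A}
    (hx : x ∈ partialSpan z (l + 1)) :
    ∃ a, ∃ y ∈ partialSpan z l, x = a * z ⟨l, hl⟩ + y := by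
  have hset : {j : Fin n | (j : ℕ) < l + 1} = insert ⟨l, hl⟩ {j : Fin n | (j : ℕ) < l} := by
    ext j
    simp only [Set.mem_ofPred_eq, Set.mem_insert_iff, Fin.ext_iff]
    omega
  rw [partialSpan, hset, Set.image_insert_eq] at hx
  exact Ideal.mem_span_insert.mp hx

theorem partialSpan_mul_mem {n : ℕ} {z : Fin n → A}
    (hzc : ∀ (j : Fin n) (a : A), z j * a = a * z j) {l : ℕ} {x : A}
    (hx : x ∈ partialSpan z l) (b : A) : x * b ∈ partialSpan z l := by
  unfold partialSpan at hx
  induction hx using Submodule.span_induction with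
  | mem x hx =>
    obtain ⟨j, hj, rfl⟩ := hx
    rw [hzc]
    exact Ideal.mul_mem_left _ _ (Ideal.subset_span ⟨j, hj, rfl⟩)
  | zero => simp
  | add x y _ _ hx hy => simpa [add_mul] using add_mem hx hy
  | smul a x _ hx => simpa [mul_assoc] using Ideal.mul_mem_left _ a hx

theorem boundedSpan_le_partialSpan (𝓕 : AlgFiltration k A) {n : ℕ} (z : Fin n → A)
    (d : Fin n → ℕ) (l i : ℕ) :
    𝓕.boundedSpan z d l i ≤ (partialSpan z l).restrictScalars k := by
  refine iSup_le fun j => iSup_le fun hj => iSup_le fun _ => ?_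
  rintro _ ⟨a, _, rfl⟩
  exact Ideal.mul_mem_left _ _ (Ideal.subset_span ⟨j, hj, rfl⟩)

theorem boundedSpan_mono (𝓕 : AlgFiltration k A) {n : ℕ} (z : Fin n → A)
    (d : Fin n → ℕ) {l l' : ℕ} (h : l ≤ l') (i : ℕ) :
    𝓕.boundedSpan z d l i ≤ 𝓕.boundedSpan z d l' i :=
  iSup_mono fun _ => iSup_le fun hj => le_iSup_of_le (hj.trans_le h) le_rfl

theorem mul_mem_boundedSpan (𝓕 : AlgFiltration k A) {n : ℕ} (z : Fin n → A)
    (d : Fin n → ℕ) {l m i : ℕ} (j : Fin n) (hj : (j : ℕ) < l) (hi : m + d j ≤ i) {a : A}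
    (ha : a ∈ 𝓕.F m) : a * z j ∈ 𝓕.boundedSpan z d l i := by
  have hd : d j ≤ i := by omega
  refine Submodule.mem_iSup_of_mem j (Submodule.mem_iSup_of_mem hj
    (Submodule.mem_iSup_of_mem hd ?_))
  exact ⟨a, 𝓕.mono (by omega) ha, rfl⟩

/-- If the top symbols form a regular sequence, every element of filtration degree `i` in the
ideal generated by the `z j` is a combination of the `z j` without cancellation of degrees
above `i`. -/
theorem mem_boundedSpan_of_regular (𝓕 : AlgFiltration k A) {n : ℕ} {z : Fin n → A}
    {d : Fin n → ℕ} (hzc : ∀ (j : Fin n) (a : A), z j * a = a * z j)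
    (hzF : ∀ j, z j ∈ 𝓕.F (d j))
    (hreg : ∀ (l : Fin n) (i : ℕ), ∀ a ∈ 𝓕.F i,
      a * z l ∈ 𝓕.symIdeal z d l (i + d l) → a ∈ 𝓕.symIdeal z d l i)
    {l : ℕ} (hl : l ≤ n) {i : ℕ} {x : A} (hx : x ∈ partialSpan z l) (hxi : x ∈ 𝓕.F i) :
    x ∈ 𝓕.boundedSpan z d l i := by
  induction l generalizing i x with
  | zero =>
    rw [partialSpan_zero, Ideal.mem_bot] at hx
    simp [hx]
  | succ l ih =>
    have hln : l < n := hl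
    let t : Fin n := ⟨l, hln⟩
    obtain ⟨a, y, hy, rfl⟩ := partialSpan_succ z hln hx
    obtain ⟨m, ha⟩ := 𝓕.exhaustive a
    induction m using Nat.strong_induction_on generalizing a y with
    | _ m ihm =>
    by_cases hmi : m + d t ≤ i
    · have haz : a * z t ∈ 𝓕.F i := 𝓕.mono hmi (𝓕.mul_mem ha (hzF t))
      have hyF : y ∈ 𝓕.F i := by simpa [t] using sub_mem hxi haz
      exact add_mem (𝓕.mul_mem_boundedSpan z d t (Nat.lt_succ_self l) hmi ha)
        (𝓕.boundedSpan_mono z d l.le_succ i (ih hln.le hy hyF))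
    · have hlt : i < m + d t := not_le.mp hmi
      have haz : a * z t ∈ 𝓕.F (m + d t) := 𝓕.mul_mem ha (hzF t)
      have hyF : y ∈ 𝓕.F (m + d t) := by
        simpa [t] using sub_mem (𝓕.mono hlt.le hxi) haz
      have hsym : a * z t ∈ 𝓕.symIdeal z d l (m + d t) := by
        rw [symIdeal_eq]
        have := sub_mem (Submodule.mem_sup_right (𝓕.F_le_prev hlt hxi))
          (Submodule.mem_sup_left (T := 𝓕.prev (m + d t)) (ih hln.le hy hyF))
        simpa [t] using this
      have has := hreg t m a ha hsym
      rw [symIdeal_eq] at has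
      obtain ⟨u, hu, a', ha', rfl⟩ := Submodule.mem_sup.mp has
      have huz : u * z t ∈ partialSpan z l :=
        partialSpan_mul_mem hzc (𝓕.boundedSpan_le_partialSpan z d l m hu) _
      have hrw : (u + a') * z t + y = a' * z t + (u * z t + y) := by
        rw [add_mul]; abel
      change (u + a') * z t + y ∈ _ at hx hxi ⊢
      rw [hrw] at hx hxi ⊢
      have hy' : u * z t + y ∈ partialSpan z l := add_mem huz hy
      cases m with
      | zero =>
        rw [prev_zero, Submodule.mem_bot] at ha'
        subst ha'
        rw [zero_mul, zero_add] at hxi ⊢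
        exact 𝓕.boundedSpan_mono z d l.le_succ i (ih hln.le hy' hxi)
      | succ m =>
        rw [prev_succ] at ha'
        exact ihm m m.lt_succ_self a' _ hy' hx hxi ha'

/-- Modulo the ideal generated by the `z j`, every element outside this ideal has a
representative whose top symbol lies outside the ideal generated by the top symbols. -/
theorem exists_representative_not_mem_symIdeal (𝓕 : AlgFiltration k A) {n : ℕ} (z : Fin n → A)
    (d : Fin n → ℕ) {l : ℕ} {a : A} (ha : a ∉ partialSpan z l) :
    ∃ u ∈ partialSpan z l, ∃ i, a - u ∈ 𝓕.F i ∧ a - u ∉ 𝓕.symIdeal z d l i := by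
  classical
  have hex : ∃ i, ∃ u ∈ partialSpan z l, a - u ∈ 𝓕.F i := by
    obtain ⟨i, hi⟩ := 𝓕.exhaustive a
    exact ⟨i, 0, zero_mem _, by simpa using hi⟩
  obtain ⟨u, hu, hui⟩ := Nat.find_spec hex
  refine ⟨u, hu, Nat.find hex, hui, fun hsym => ?_⟩
  rw [symIdeal_eq] at hsym
  obtain ⟨v, hv, a', ha', hva⟩ := Submodule.mem_sup.mp hsym
  have huv : u + v ∈ partialSpan z l :=
    add_mem hu (𝓕.boundedSpan_le_partialSpan z d l _ hv)
  have haeq : a - (u + v) = a' := by rw [← sub_sub, ← hva, add_sub_cancel_left]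
  rcases Nat.eq_zero_or_eq_succ_pred (Nat.find hex) with h0 | h1
  · rw [h0, prev_zero, Submodule.mem_bot] at ha'
    rw [ha', sub_eq_zero] at haeq
    exact ha (haeq ▸ huv)
  · rw [h1, Nat.succ_eq_add_one, prev_succ] at ha'
    exact Nat.find_min hex (m := (Nat.find hex).pred) (by omega) ⟨u + v, huv, haeq ▸ ha'⟩

end AlgFiltration

/-- Let `A` be a nonnegatively filtered algebra over a field with central elements
`z₁, …, zₙ` whose top symbols form a regular sequence in the commutative associated graded
algebra `Gr A`.  If `Gr A` modulo the ideal generated by the top symbols is an integral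
domain, then `A/(z₁, …, zₙ)` is an integral domain. -/
theorem quotient_domain_of_gr_domain {k A : Type*} [Field k] [Ring A] [Algebra k A]
    (𝓕 : AlgFiltration k A) (hcomm : 𝓕.GrComm)
    (n : ℕ) (z : Fin n → A) (d : Fin n → ℕ)
    (hzc : ∀ (j : Fin n) (a : A), z j * a = a * z j)
    (hzF : ∀ j, z j ∈ 𝓕.F (d j)) (hzd : ∀ j, z j ∉ 𝓕.prev (d j))
    -- the top symbols form a regular sequence in `Gr A`
    (hreg : ∀ (l : Fin n) (i : ℕ), ∀ a ∈ 𝓕.F i,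
      a * z l ∈ 𝓕.symIdeal z d l (i + d l) → a ∈ 𝓕.symIdeal z d l i)
    -- `Gr A / (Gr z₁, …, Gr zₙ)` is an integral domain:
    (hdom : ∀ {i j : ℕ} {a b : A}, a ∈ 𝓕.F i → b ∈ 𝓕.F j →
      a ∉ 𝓕.symIdeal z d n i → b ∉ 𝓕.symIdeal z d n j →
      a * b ∉ 𝓕.symIdeal z d n (i + j))
    (hnontriv : (1 : A) ∉ 𝓕.symIdeal z d n 0) :
    -- then `A/(z₁, …, zₙ)` is an integral domain:
    (∀ a b : A, a * b ∈ Ideal.span (Set.range z) →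
      a ∈ Ideal.span (Set.range z) ∨ b ∈ Ideal.span (Set.range z)) ∧
    (1 : A) ∉ Ideal.span (Set.range z) := by
  rw [← AlgFiltration.partialSpan_top]
  have key : ∀ {i : ℕ} {x : A}, x ∈ AlgFiltration.partialSpan z n → x ∈ 𝓕.F i →
      x ∈ 𝓕.symIdeal z d n i := fun hx hxi =>
    Submodule.mem_sup_left (𝓕.mem_boundedSpan_of_regular hzc hzF hreg le_rfl hx hxi)
  refine ⟨fun a b hab => ?_, fun h1 => hnontriv (key h1 𝓕.one_mem)⟩
  by_contra! h
  obtain ⟨u, hu, i, hai, has⟩ := 𝓕.exists_representative_not_mem_symIdeal z d h.1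
  obtain ⟨v, hv, j, hbj, hbs⟩ := 𝓕.exists_representative_not_mem_symIdeal z d h.2
  refine hdom hai hbj has hbs (key ?_ (𝓕.mul_mem hai hbj))
  rw [sub_mul, mul_sub]
  exact sub_mem (sub_mem hab (Ideal.mul_mem_left _ _ hv))
    (AlgFiltration.partialSpan_mul_mem hzc hu _)
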